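/- In the marked setup below, let λ be a nonnegative dominant marking with decomposition coefficients α_K(λ), and let S = Σ_{K∈𝒥*} α_K(λ). Then every integer point x ∈ ℤ^P with x ∈ R_λ(P,<,<') can be uniquely expressed in the form x = 1_{max_{<'} J_1} + ⋯ + 1_{max_{<'} J_S}, where J_1 ⊆ ⋯ ⊆ J_S is a weakly increasing tuple in 𝒥 such that for every K ∈ 𝒥* exactly α_K(λ) of the order ideals J_i satisfy J_i ∩ P* = K. -/

import Mathlib

open Pointwise

/-- `J` is an order ideal (lower set) with respect to the strict order relation `r`. -/
def IsLowerIdeal {P : Type*} (r : P → P → Prop) (J : Set P) : Prop :=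
  ∀ ⦃p q : P⦄, r p q → q ∈ J → p ∈ J

/-- The set of `r`-maximal elements of `J`. -/
def maxElems {P : Type*} (r : P → P → Prop) (J : Set P) : Set P :=
  {p ∈ J | ∀ q ∈ J, ¬ r p q}

/-- The 0/1 indicator vector of `A ⊆ P`, as a point of `ℝ^P`. -/
noncomputable def ind {P : Type*} (A : Set P) : P → ℝ :=
  A.indicator 1

/-- The order ideal of `(P, r)` generated by `A`. -/
def genIdeal {P : Type*} (r : P → P → Prop) (A : Set P) : Set P :=
  {p | ∃ q ∈ A, p = q ∨ r p q}

/-- The Hibi–Li operation `J1 *' J2` relative to the order `r`: the order ideal of `(P, r)`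
generated by `(J1 ∩ J2) ∩ (max_r J1 ∪ max_r J2)`. -/
def starOp {P : Type*} (r : P → P → Prop) (J1 J2 : Set P) : Set P :=
  genIdeal r ((J1 ∩ J2) ∩ (maxElems r J1 ∪ maxElems r J2))

/-- The relative poset polytope `R(P, lt, lt')`: the convex hull of the points
`1_{max_{lt'} J}` over all order ideals `J` of `(P, lt)`. -/
noncomputable def RPP {P : Type*} (lt lt' : P → P → Prop) : Set (P → ℝ) :=
  convexHull ℝ {x | ∃ J : Set P, IsLowerIdeal lt J ∧ x = ind (maxElems lt' J)}

/-- The dilation `m·Q = {m·x : x ∈ Q}`. -/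
def dilate {P : Type*} (m : ℕ) (Q : Set (P → ℝ)) : Set (P → ℝ) :=
  (fun x => (m : ℝ) • x) '' Q

/-- The order polytope of `(P, lt)`. -/
def orderPolytope {P : Type*} (lt : P → P → Prop) : Set (P → ℝ) :=
  {x | (∀ p, 0 ≤ x p ∧ x p ≤ 1) ∧ ∀ p q, lt q p → x p ≤ x q}

/-- The chain polytope of `(P, lt)`. -/
def chainPolytope {P : Type*} (lt : P → P → Prop) : Set (P → ℝ) :=
  {x | (∀ p, 0 ≤ x p) ∧ ∀ (k : ℕ) (c : Fin k → P),
    (∀ i j : Fin k, i < j → lt (c i) (c j)) → (∑ i, x (c i)) ≤ 1}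


/-- The fundamental marked relative poset polytope `R_{ω_K}(P, lt, lt')`: the convex hull
of the points `1_{max_{lt'} J}` over order ideals `J` of `(P, lt)` with `J ∩ P* = K`. -/
noncomputable def RPPfund {P : Type*} (lt lt' : P → P → Prop) (Pstar K : Set P) :
    Set (P → ℝ) :=
  convexHull ℝ
    {x | ∃ J : Set P, IsLowerIdeal lt J ∧ J ∩ Pstar = K ∧ x = ind (maxElems lt' J)}

/-- The set `𝒥*` of order ideals of the subposet `(P*, lt)`. -/
def idealsOn {P : Type*} (lt : P → P → Prop) (Pstar : Set P) : Set (Set P) :=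
  {K | K ⊆ Pstar ∧ ∀ p q : P, p ∈ Pstar → q ∈ Pstar → lt p q → q ∈ K → p ∈ K}

/-- The marked relative poset polytope for a coefficient function `α : 𝒥* → ℕ`:
the Minkowski sum `Σ_{K ∈ 𝒥*} α_K · R_{ω_K}(P, lt, lt')`. -/
noncomputable def RPPmarked {P : Type*} [Fintype P] (lt lt' : P → P → Prop)
    (Pstar : Set P) (α : Set P → ℕ) : Set (P → ℝ) :=
  ∑ K ∈ (Set.toFinite (idealsOn lt Pstar)).toFinset, dilate (α K) (RPPfund lt lt' Pstar K)



/-- The recursion linking `x = Σ 1_{max J}` and `z = Σ 1_J`. -/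
def RecRel {P : Type*} (r : P → P → Prop) (x z : P → ℝ) : Prop :=
  ∀ p, ∃ m : ℝ, z p = x p + m ∧ 0 ≤ m ∧ (∀ q, r p q → z q ≤ m) ∧ (m = 0 ∨ ∃ q, r p q ∧ z q = m)

theorem RecRel.unique_m {P : Type*} {r : P → P → Prop} {x z x' : P → ℝ}
    (h : RecRel r x z) (h' : RecRel r x' z) : x = x' := by
  funext p
  obtain ⟨m, h1, h2, h3, h4⟩ := h p
  obtain ⟨m', h1', h2', h3', h4'⟩ := h' p
  have hm : m = m' := by
    apply le_antisymm
    · rcases h4 with h4 | ⟨q, hq, h4⟩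
      · linarith
      · rw [← h4]; exact h3' q hq
    · rcases h4' with h4 | ⟨q, hq, h4⟩
      · linarith
      · rw [← h4]; exact h3 q hq
  linarith

theorem wf_flip {P : Type*} [Finite P] (r : P → P → Prop) (hirr : ∀ p, ¬ r p p)
    (htr : ∀ a b c, r a b → r b c → r a c) : WellFounded (fun a b => r b a) := by
  have : IsTrans P (fun a b => r b a) := ⟨fun a b c h1 h2 => htr c b a h2 h1⟩
  have : Std.Irrefl (fun a b => r b a) := ⟨fun a => hirr a⟩
  exact Finite.wellFounded_of_trans_of_irrefl _

theorem RecRel.unique_z {P : Type*} [Finite P] {r : P → P → Prop} (hirr : ∀ p, ¬ r p p)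
    (htr : ∀ a b c, r a b → r b c → r a c) {x z z' : P → ℝ}
    (h : RecRel r x z) (h' : RecRel r x z') : z = z' := by
  funext p
  induction p using (wf_flip r hirr htr).induction with
  | _ p ih =>
    obtain ⟨m, h1, h2, h3, h4⟩ := h p
    obtain ⟨m', h1', h2', h3', h4'⟩ := h' p
    have hm : m = m' := by
      apply le_antisymm
      · rcases h4 with h4 | ⟨q, hq, h4⟩
        · linarith
        · rw [← h4, ih q hq]; exact h3' q hq
      · rcases h4' with h4 | ⟨q, hq, h4⟩
        · linarith
        · rw [← h4, ← ih q hq]; exact h3 q hq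
    linarith

theorem RecRel.int {P : Type*} [Finite P] {r : P → P → Prop} (hirr : ∀ p, ¬ r p p)
    (htr : ∀ a b c, r a b → r b c → r a c) {x : P → ℤ} {z : P → ℝ}
    (h : RecRel r (fun p => (x p : ℝ)) z) (p : P) : ∃ n : ℤ, z p = n := by
  induction p using (wf_flip r hirr htr).induction with
  | _ p ih =>
    obtain ⟨m, h1, h2, h3, h4⟩ := h p
    rcases h4 with h4 | ⟨q, hq, h4⟩
    · exact ⟨x p, by rw [h1, h4]; simp⟩
    · obtain ⟨n, hn⟩ := ih q hq
      exact ⟨x p + n, by rw [h1, ← h4, hn]; push_cast; rfl⟩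

/-- A weighted chain of sets closed under `r`-predecessors gives the recursion. -/
theorem recRel_of_chain {P ι : Type*} [Fintype ι] (r : P → P → Prop) (w : ι → ℝ)
    (hw : ∀ i, 0 ≤ w i) (J : ι → Set P)
    (hJ : ∀ i, w i ≠ 0 → IsLowerIdeal r (J i))
    (hch : ∀ i j, w i ≠ 0 → w j ≠ 0 → J i ⊆ J j ∨ J j ⊆ J i) :
    RecRel r (fun p => ∑ i, w i * ind (maxElems r (J i)) p) (fun p => ∑ i, w i * ind (J i) p) := by
  classical
  intro p
  let B : ι → Prop := fun i => w i ≠ 0 ∧ ∃ q ∈ J i, r p q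
  refine ⟨∑ i, if B i then w i else 0, ?_, ?_, ?_, ?_⟩
  · simp only
    rw [← Finset.sum_add_distrib]
    refine Finset.sum_congr rfl fun i _ => ?_
    by_cases hi : w i = 0
    · simp [hi]
    by_cases hB : ∃ q ∈ J i, r p q
    · have hp : p ∈ J i := by
        obtain ⟨q, hq, hr⟩ := hB
        exact hJ i hi hr hq
      have hp' : p ∉ maxElems r (J i) := by
        rintro ⟨_, h⟩
        obtain ⟨q, hq, hr⟩ := hB
        exact h q hq hr
      have : B i := ⟨hi, hB⟩
      simp [ind, hp, hp', this]
    · have hnB : ¬ B i := fun h => hB h.2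
      have : p ∈ maxElems r (J i) ↔ p ∈ J i :=
        ⟨fun h => h.1, fun h => ⟨h, fun q hq hr => hB ⟨q, hq, hr⟩⟩⟩
      simp [ind, Set.indicator, this, hnB]
  · exact Finset.sum_nonneg fun i _ => by split_ifs <;> simp [hw]
  · intro q hq
    refine Finset.sum_le_sum fun i _ => ?_
    by_cases hi : w i = 0
    · simp [hi]
    by_cases hqi : q ∈ J i
    · have : B i := ⟨hi, q, hqi, hq⟩
      simp [ind, hqi, this]
    · simp only [ind, Set.indicator, hqi, if_false, mul_zero]
      split_ifs <;> simp [hw]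
  · by_cases hne : ∃ i, B i
    · right
      have hfin : (Finset.univ.filter B).Nonempty := by
        obtain ⟨i, hi⟩ := hne
        exact ⟨i, by simp [hi]⟩
      -- minimal element of the chain
      obtain ⟨A, hA⟩ := ((Finset.univ.filter B).image J).exists_minimal (by simpa using hfin)
      have hAm := hA.1
      simp only [Finset.mem_image, Finset.mem_filter, Finset.mem_univ, true_and] at hAm
      obtain ⟨i0, ⟨hw0, q0, hq0, hr0⟩, rfl⟩ := hAm
      refine ⟨q0, hr0, Finset.sum_congr rfl fun i _ => ?_⟩
      by_cases hi : w i = 0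
      · simp [hi]
      by_cases hB : B i
      · have hsub : J i0 ⊆ J i := by
          rcases hch i0 i hw0 hi with h | h
          · exact h
          · exact hA.2 (by simp; exact ⟨i, hB, rfl⟩) h
        simp [ind, hsub hq0, hB]
      · have : q0 ∉ J i := fun h => hB ⟨hi, q0, h, hr0⟩
        simp [ind, this, hB]
    · left
      push Not at hne
      simp [hne]

theorem fin_upper {n : ℕ} (A : Finset (Fin n)) (hA : ∀ i j, i ≤ j → i ∈ A → j ∈ A) (i : Fin n) :
    i ∈ A ↔ n ≤ i + A.card := by
  constructor
  · intro h
    have h1 : Finset.Ici i ⊆ A := fun j hj => hA i j (by simpa using hj) h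
    have := Finset.card_le_card h1
    rw [Fin.card_Ici] at this
    omega
  · intro h
    by_contra hi
    have h1 : A ⊆ Finset.Ioi i := fun j hj => by
      simp only [Finset.mem_Ioi]
      by_contra hc
      exact hi (hA j i (not_lt.1 hc) hj)
    have := Finset.card_le_card h1
    rw [Fin.card_Ioi] at this
    omega

theorem sum_ind_eq_card {P ι : Type*} [Fintype ι] (J : ι → Set P) (p : P)
    [DecidablePred fun i => p ∈ J i] :
    ∑ i, ind (J i) p = ((Finset.univ.filter fun i => p ∈ J i).card : ℝ) := by
  simp [ind, Set.indicator, Finset.sum_ite]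

theorem mem_iff_level {P : Type*} {n : ℕ} (J : Fin n → Set P) (hJ : Monotone J) (z : P → ℕ)
    (p : P) (hz : ∑ i, ind (J i) p = (z p : ℝ)) (i : Fin n) : p ∈ J i ↔ n ≤ i + z p := by
  classical
  rw [sum_ind_eq_card] at hz
  have hz' := Nat.cast_injective hz
  have := fin_upper (Finset.univ.filter fun i => p ∈ J i)
    (fun i j hij hi => by simp at hi ⊢; exact hJ hij hi) i
  rw [hz'] at this
  simpa using this

theorem level_sum {P : Type*} {n : ℕ} (z : P → ℕ) (p : P) (hz : z p ≤ n) :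
    ∑ i : Fin n, ind {p | n ≤ i + z p} p = (z p : ℝ) := by
  classical
  rw [sum_ind_eq_card]
  congr 1
  simp only [Set.mem_ofPred_eq]
  have h : (Finset.univ.filter fun i : Fin n => n ≤ i + z p).map Fin.valEmbedding
      = Finset.Ico (n - z p) n := by
    ext i
    simp only [Finset.mem_map, Finset.mem_filter, Finset.mem_univ, true_and,
      Fin.valEmbedding_apply, Finset.mem_Ico]
    constructor
    · rintro ⟨j, hj, rfl⟩
      have := j.2
      omega
    · rintro ⟨h1, h2⟩
      exact ⟨⟨i, h2⟩, by simp only; omega, rfl⟩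
  rw [← Finset.card_map Fin.valEmbedding, h, Nat.card_Ico]
  omega

theorem star_identity {P : Type*} (r : P → P → Prop) (hirr : ∀ p, ¬ r p p)
    (htr : ∀ a b c, r a b → r b c → r a c) (J1 J2 : Set P)
    (h1 : IsLowerIdeal r J1) (h2 : IsLowerIdeal r J2) (p : P) :
    ind (maxElems r (J1 ∪ J2)) p + ind (maxElems r (starOp r J1 J2)) p =
      ind (maxElems r J1) p + ind (maxElems r J2) p := by
  classical
  have hs : p ∈ maxElems r (starOp r J1 J2) ↔ (p ∈ J1 ∧ p ∈ J2) ∧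
      (p ∈ maxElems r J1 ∨ p ∈ maxElems r J2) := by
    constructor
    · rintro ⟨⟨q, hq, hpq⟩, hm⟩
      rcases hpq with rfl | hpq
      · exact hq
      · exact absurd hpq (hm q ⟨q, hq, Or.inl rfl⟩)
    · intro h
      refine ⟨⟨p, h, Or.inl rfl⟩, ?_⟩
      rintro q ⟨s, ⟨⟨hs1, hs2⟩, _⟩, hqs⟩ hpq
      have hps : r p s := by
        rcases hqs with rfl | hqs
        · exact hpq
        · exact htr _ _ _ hpq hqs
      rcases h.2 with h | h
      · exact h.2 s hs1 hps
      · exact h.2 s hs2 hps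
  have hu : p ∈ maxElems r (J1 ∪ J2) ↔ (p ∈ J1 ∨ p ∈ J2) ∧ (p ∈ J1 → p ∈ maxElems r J1) ∧
      (p ∈ J2 → p ∈ maxElems r J2) := by
    constructor
    · rintro ⟨h, hm⟩
      exact ⟨h, fun h => ⟨h, fun q hq => hm q (Or.inl hq)⟩,
        fun h => ⟨h, fun q hq => hm q (Or.inr hq)⟩⟩
    · rintro ⟨h, ha, hb⟩
      refine ⟨h, ?_⟩
      rintro q (hq | hq) hr
      · exact (ha (h1 hr hq)).2 q hq hr
      · exact (hb (h2 hr hq)).2 q hq hr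
  have m1 : p ∈ maxElems r J1 → p ∈ J1 := fun h => h.1
  have m2 : p ∈ maxElems r J2 → p ∈ J2 := fun h => h.1
  simp only [ind, Set.indicator, hs, hu, Pi.one_apply]
  by_cases a1 : p ∈ J1 <;> by_cases a2 : p ∈ J2 <;> by_cases b1 : p ∈ maxElems r J1 <;>
    by_cases b2 : p ∈ maxElems r J2 <;> simp_all

/-- `y` is a nonnegative combination, of total weight `m`, of generators, with weights `c`. -/
def IsRep {P : Type*} [Fintype P] (lt lt' : P → P → Prop) (m : ℝ) (y : P → ℝ)
    (c : Set P → ℝ) : Prop :=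
  (∀ J, 0 ≤ c J) ∧ (∀ J, ¬ IsLowerIdeal lt J → c J = 0) ∧ ∑ J, c J = m ∧
    ∀ p, ∑ J, c J * ind (maxElems lt' J) p = y p

theorem IsRep.lin {P : Type*} [Fintype P] {lt lt' : P → P → Prop} {m m' : ℝ} {y y' : P → ℝ}
    {c c' : Set P → ℝ} (h : IsRep lt lt' m y c) (h' : IsRep lt lt' m' y' c') (a b : ℝ)
    (ha : 0 ≤ a) (hb : 0 ≤ b) :
    IsRep lt lt' (a * m + b * m') (a • y + b • y') (a • c + b • c') := by
  obtain ⟨h1, h2, h3, h4⟩ := h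
  obtain ⟨h1', h2', h3', h4'⟩ := h'
  refine ⟨fun J => ?_, fun J hJ => ?_, ?_, fun p => ?_⟩
  · have := mul_nonneg ha (h1 J)
    have := mul_nonneg hb (h1' J)
    simp; linarith
  · simp [h2 J hJ, h2' J hJ]
  · simp [Finset.sum_add_distrib, ← Finset.mul_sum, h3, h3']
  · simp [← h4, ← h4', Finset.mul_sum, add_mul, Finset.sum_add_distrib, mul_assoc]

theorem exists_rep_fund {P : Type*} [Fintype P] (lt lt' : P → P → Prop) (Pstar K : Set P)
    (y : P → ℝ) (hy : y ∈ RPPfund lt lt' Pstar K) : ∃ c, IsRep lt lt' 1 y c := by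
  classical
  have : RPPfund lt lt' Pstar K ⊆ {y | ∃ c, IsRep lt lt' 1 y c} := by
    refine convexHull_min ?_ ?_
    · rintro _ ⟨J, hJ, -, rfl⟩
      refine ⟨Pi.single J 1, fun J' => ?_, fun J' hJ' => ?_, ?_, fun p => ?_⟩
      · by_cases h : J' = J
        · subst h; simp
        · simp [h]
      · have : J' ≠ J := by rintro rfl; exact hJ' hJ
        simp [this]
      · simp
      · simp [Pi.single_apply]
    · rintro y ⟨c, hc⟩ y' ⟨c', hc'⟩ a b ha hb hab
      refine ⟨a • c + b • c', ?_⟩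
      have := hc.lin hc' a b ha hb
      simpa [hab] using this
  exact this hy

theorem fund_star {P : Type*} [Fintype P] (lt lt' : P → P → Prop) (Pstar K : Set P)
    (hiii : ∀ p ∈ Pstar, ∀ q : P, ¬ lt' p q)
    (y : P → ℝ) (hy : y ∈ RPPfund lt lt' Pstar K) (p : P) (hp : p ∈ Pstar) :
    y p = K.indicator 1 p := by
  have : RPPfund lt lt' Pstar K ⊆ {y | y p = K.indicator 1 p} := by
    refine convexHull_min ?_ ?_
    · rintro _ ⟨J, hJ, hK, rfl⟩
      have h : p ∈ maxElems lt' J ↔ p ∈ K := by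
        rw [← hK]
        exact ⟨fun h => ⟨h.1, hp⟩, fun h => ⟨h.1, fun q _ => hiii p hp q⟩⟩
      classical
      simp [ind, Set.indicator, h]
    · intro y hy y' hy' a b ha hb hab
      simp only [Set.mem_ofPred_eq] at hy hy' ⊢
      simp only [Pi.add_apply, Pi.smul_apply, smul_eq_mul, hy, hy', ← add_mul, hab, one_mul]
  exact this hy

theorem exists_rep_sum {P ι : Type*} [Fintype P] (lt lt' : P → P → Prop) (s : Finset ι)
    (a : ι → ℕ) (y : ι → P → ℝ) (h : ∀ i ∈ s, ∃ c, IsRep lt lt' 1 (y i) c) :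
    ∃ c, IsRep lt lt' ((∑ i ∈ s, a i : ℕ) : ℝ) (∑ i ∈ s, (a i : ℝ) • y i) c := by
  classical
  induction s using Finset.induction_on with
  | empty => exact ⟨0, by simp [IsRep]⟩
  | insert i s hi ih =>
    obtain ⟨c, hc⟩ := ih fun j hj => h j (Finset.mem_insert_of_mem hj)
    obtain ⟨d, hd⟩ := h i (Finset.mem_insert_self _ _)
    refine ⟨(a i : ℝ) • d + (1 : ℝ) • c, ?_⟩
    have := hd.lin hc (a i) 1 (by positivity) (by norm_num)
    rw [Finset.sum_insert hi, Finset.sum_insert hi]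
    simpa using this

theorem exists_max_rep {P : Type*} [Fintype P] (lt lt' : P → P → Prop) (m : ℝ) (y : P → ℝ)
    (h : ∃ c, IsRep lt lt' m y c) (f : Set P → ℝ) :
    ∃ c, IsRep lt lt' m y c ∧ ∀ c', IsRep lt lt' m y c' → ∑ J, c' J * f J ≤ ∑ J, c J * f J := by
  have hcl : IsClosed {c | IsRep lt lt' m y c} := by
    simp only [IsRep, Set.ofPred_and, Set.ofPred_forall]
    refine IsClosed.inter ?_ (IsClosed.inter ?_ (IsClosed.inter ?_ ?_))
    · exact isClosed_iInter fun J => isClosed_le (by fun_prop) (by fun_prop)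
    · exact isClosed_iInter fun J => isClosed_iInter fun _ => isClosed_eq (by fun_prop) (by fun_prop)
    · exact isClosed_eq (by fun_prop) (by fun_prop)
    · exact isClosed_iInter fun p => isClosed_eq (by fun_prop) (by fun_prop)
  have hsub : {c | IsRep lt lt' m y c} ⊆ Set.Icc 0 (fun _ => m) := by
    rintro c ⟨h1, h2, h3, h4⟩
    refine ⟨h1, fun J => ?_⟩
    rw [← h3]
    exact Finset.single_le_sum (f := c) (fun J _ => h1 J) (Finset.mem_univ J)
  have hK : IsCompact {c | IsRep lt lt' m y c} := isCompact_Icc.of_isClosed_subset hcl hsub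
  obtain ⟨c, hc, hmax⟩ := hK.exists_isMaxOn h
    (f := fun c : Set P → ℝ => ∑ J, c J * f J) (by fun_prop)
  exact ⟨c, hc, fun c' hc' => hmax hc'⟩

theorem exists_chain_rep {P : Type*} [Fintype P] (lt lt' : P → P → Prop)
    (hlt'irr : ∀ p, ¬ lt' p p) (hlt'tr : ∀ a b c, lt' a b → lt' b c → lt' a c)
    (hweak : ∀ p q, lt' p q → lt p q)
    (hstar : ∀ J1 J2 : Set P, IsLowerIdeal lt J1 → IsLowerIdeal lt J2 →
      IsLowerIdeal lt (starOp lt' J1 J2)) (m : ℝ) (y : P → ℝ)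
    (h : ∃ c, IsRep lt lt' m y c) :
    ∃ c, IsRep lt lt' m y c ∧ ∀ J1 J2, c J1 ≠ 0 → c J2 ≠ 0 → J1 ⊆ J2 ∨ J2 ⊆ J1 := by
  classical
  obtain ⟨c, hc, hmax⟩ := exists_max_rep lt lt' m y h (fun J => 2 ^ J.ncard)
  refine ⟨c, hc, fun J1 J2 n1 n2 => ?_⟩
  by_contra hcon
  push Not at hcon
  obtain ⟨h12, h21⟩ := hcon
  obtain ⟨c1, c2, c3, c4⟩ := hc
  have i1 : IsLowerIdeal lt J1 := by by_contra hh; exact n1 (c2 _ hh)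
  have i2 : IsLowerIdeal lt J2 := by by_contra hh; exact n2 (c2 _ hh)
  have i1' : IsLowerIdeal lt' J1 := fun p q hpq => i1 (hweak p q hpq)
  have i2' : IsLowerIdeal lt' J2 := fun p q hpq => i2 (hweak p q hpq)
  have iu : IsLowerIdeal lt (J1 ∪ J2) := fun p q hpq hq => hq.imp (i1 hpq) (i2 hpq)
  have is := hstar J1 J2 i1 i2
  set U := J1 ∪ J2 with hU
  set T := starOp lt' J1 J2 with hT
  set e := min (c J1) (c J2) with he
  have hepos : 0 < e := lt_min ((c1 J1).lt_of_ne' n1) ((c1 J2).lt_of_ne' n2)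
  have hne : J1 ≠ J2 := by rintro rfl; exact h12 le_rfl
  let c' : Set P → ℝ := fun J => c J - (if J = J1 then e else 0) - (if J = J2 then e else 0)
    + (if J = U then e else 0) + (if J = T then e else 0)
  have key : ∀ g : Set P → ℝ, ∑ J, c' J * g J = ∑ J, c J * g J + e * (g U + g T - g J1 - g J2) := by
    intro g
    simp only [c', add_mul, sub_mul, Finset.sum_add_distrib, Finset.sum_sub_distrib, ite_mul,
      zero_mul, Finset.sum_ite_eq', Finset.mem_univ, if_true]
    ring
  have hrep : IsRep lt lt' m y c' := by
    refine ⟨fun J => ?_, fun J hJ => ?_, ?_, fun p => ?_⟩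
    · have e1 : e ≤ c J1 := min_le_left _ _
      have e2 : e ≤ c J2 := min_le_right _ _
      have h0 := c1 J
      have a3 : 0 ≤ (if J = U then e else 0) := by split_ifs <;> linarith
      have a4 : 0 ≤ (if J = T then e else 0) := by split_ifs <;> linarith
      have a5 : 0 ≤ c J - (if J = J1 then e else 0) - (if J = J2 then e else 0) := by
        by_cases hJ1 : J = J1
        · have : J ≠ J2 := by rw [hJ1]; exact hne
          rw [if_pos hJ1, if_neg this, hJ1]; linarith
        · by_cases hJ2 : J = J2
          · rw [if_neg hJ1, if_pos hJ2, hJ2]; linarith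
          · rw [if_neg hJ1, if_neg hJ2]; linarith
      simp only [c']; linarith
    · have q1 : J ≠ J1 := by rintro rfl; exact hJ i1
      have q2 : J ≠ J2 := by rintro rfl; exact hJ i2
      have q3 : J ≠ U := by intro h; exact hJ (h ▸ iu)
      have q4 : J ≠ T := by intro h; exact hJ (h ▸ is)
      simp [c', q1, q2, q3, q4, c2 J hJ]
    · have := key 1
      simpa [c3] using this
    · rw [key fun J => ind (maxElems lt' J) p, c4 p]
      have := star_identity lt' hlt'irr hlt'tr J1 J2 i1' i2' p
      rw [← hU, ← hT] at this
      rw [show ind (maxElems lt' U) p + ind (maxElems lt' T) p - ind (maxElems lt' J1) p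
        - ind (maxElems lt' J2) p = 0 by linarith]
      simp
  have hle := hmax c' hrep
  rw [key] at hle
  have hs1 : J1 ⊂ U := ⟨Set.subset_union_left, fun h => h21 (Set.subset_union_right.trans h)⟩
  have hs2 : J2 ⊂ U := ⟨Set.subset_union_right, fun h => h12 (Set.subset_union_left.trans h)⟩
  have l1 := Set.ncard_lt_ncard hs1
  have l2 := Set.ncard_lt_ncard hs2
  have b1 : (2 : ℝ) ^ (J1.ncard + 1) ≤ 2 ^ U.ncard := pow_le_pow_right₀ (by norm_num) l1
  have b2 : (2 : ℝ) ^ (J2.ncard + 1) ≤ 2 ^ U.ncard := pow_le_pow_right₀ (by norm_num) l2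
  have b3 : (0 : ℝ) < 2 ^ T.ncard := by positivity
  rw [pow_succ] at b1 b2
  have : 0 < e * ((2 : ℝ) ^ U.ncard + 2 ^ T.ncard - 2 ^ J1.ncard - 2 ^ J2.ncard) :=
    mul_pos hepos (by linarith)
  linarith

/-- A chain with multiplicities `α` can be enumerated increasingly. -/
theorem exists_enum {P : Type*} [Fintype P] (F : Finset (Set P)) (α : Set P → ℕ)
    (hch : ∀ K1 K2 : Set P, α K1 ≠ 0 → α K2 ≠ 0 → K1 ⊆ K2 ∨ K2 ⊆ K1) :
    ∃ L : Fin (∑ K ∈ F, α K) → Set P, Monotone L ∧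
      (∀ K ∈ F, Nat.card {i // L i = K} = α K) ∧
      ∀ g : Set P → ℝ, ∑ i, g (L i) = ∑ K ∈ F, (α K : ℝ) * g K := by
  classical
  have hcard : Fintype.card (Σ K : F, Fin (α K)) = ∑ K ∈ F, α K := by
    simpa using Finset.sum_attach F α
  let e : Fin (∑ K ∈ F, α K) ≃ (Σ K : F, Fin (α K)) := (Fintype.equivFinOfCardEq hcard).symm
  let f : Fin (∑ K ∈ F, α K) → ℕ := fun i => ((e i).1 : Set P).ncard
  let e' := (Tuple.sort f).trans e
  have hmono : Monotone fun i => ((e' i).1 : Set P).ncard := Tuple.monotone_sort f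
  refine ⟨fun i => (e' i).1, ?_, ?_, ?_⟩
  · intro i j hij
    have hne : ∀ i, α (e' i).1 ≠ 0 := fun i => by
      have := (e' i).2.pos
      omega
    rcases hch _ _ (hne i) (hne j) with h | h
    · exact h
    · exact (Set.eq_of_subset_of_ncard_le h (hmono hij)).symm.subset
  · intro K hK
    have e2 : {i // ((e' i).1 : Set P) = K} ≃ {s : Σ K : F, Fin (α K) // s.1 = ⟨K, hK⟩} :=
      e'.subtypeEquiv fun i => by simp [Subtype.ext_iff]
    rw [Nat.card_congr e2, Nat.card_congr (Equiv.sigmaSubtype (⟨K, hK⟩ : F))]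
    simp
  · intro g
    rw [e'.sum_comp (fun s => g (s.1 : Set P)), Fintype.sum_sigma]
    simp only [Finset.sum_const, Finset.card_univ, Fintype.card_fin, nsmul_eq_mul]
    exact Finset.sum_coe_sort F (fun K => (α K : ℝ) * g K)

/-- For a nonnegative dominant marking `λ` with decomposition coefficients `α` and
`S = Σ_K α_K`, every integer point of `R_λ(P, lt, lt')` is uniquely
`1_{max_{lt'} J_1} + ⋯ + 1_{max_{lt'} J_S}` for a weakly increasing tuple `J_1 ⊆ ⋯ ⊆ J_S`
in `𝒥` with exactly `α_K` of the `J_i` satisfying `J_i ∩ P* = K`, for every `K ∈ 𝒥*`. -/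
theorem stmt14 {P : Type*} [Fintype P] (lt lt' : P → P → Prop)
    (hltirr : ∀ p, ¬ lt p p) (hlttr : ∀ a b c, lt a b → lt b c → lt a c)
    (hlt'irr : ∀ p, ¬ lt' p p) (hlt'tr : ∀ a b c, lt' a b → lt' b c → lt' a c)
    (hweak : ∀ p q, lt' p q → lt p q)
    (hstar : ∀ J1 J2 : Set P, IsLowerIdeal lt J1 → IsLowerIdeal lt J2 →
      IsLowerIdeal lt (starOp lt' J1 J2))
    (Pstar : Set P)
    (hmin : ∀ p : P, (∀ q, ¬ lt q p) → p ∈ Pstar)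
    (hmax : ∀ p : P, (∀ q, ¬ lt p q) → p ∈ Pstar)
    (hiii : ∀ p ∈ Pstar, ∀ q : P, ¬ lt' p q)
    (lam : P → ℤ) (α : Set P → ℕ)
    (hlamnn : ∀ p ∈ Pstar, 0 ≤ lam p)
    (hdom : ∀ p q : P, p ∈ Pstar → q ∈ Pstar → lt p q → lam q ≤ lam p)
    (hαsupp : ∀ K : Set P, α K ≠ 0 → K ∈ idealsOn lt Pstar ∧ K.Nonempty)
    (hαchain : ∀ K1 K2 : Set P, α K1 ≠ 0 → α K2 ≠ 0 → K1 ⊆ K2 ∨ K2 ⊆ K1)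
    (hαsum : ∀ p ∈ Pstar, lam p =
      ∑ K ∈ (Set.toFinite (idealsOn lt Pstar)).toFinset, (α K : ℤ) * K.indicator 1 p)
    (x : P → ℤ) (hx : (fun p => (x p : ℝ)) ∈ RPPmarked lt lt' Pstar α) :
    ∃! J : Fin (∑ K ∈ (Set.toFinite (idealsOn lt Pstar)).toFinset, α K) → Set P,
      ((∀ i, IsLowerIdeal lt (J i)) ∧ Monotone J ∧
        (∀ K ∈ idealsOn lt Pstar, Nat.card {i // J i ∩ Pstar = K} = α K) ∧
        (fun p => (x p : ℝ)) = ∑ i, ind (maxElems lt' (J i))) := by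
  classical
  set F := (Set.toFinite (idealsOn lt Pstar)).toFinset with hF
  set S := ∑ K ∈ F, α K with hS
  -- the tuple yields the recursion
  have hrec : ∀ J : Fin S → Set P, (∀ i, IsLowerIdeal lt (J i)) → Monotone J →
      RecRel lt' (∑ i, ind (maxElems lt' (J i))) (∑ i, ind (J i)) := by
    intro J hJ hm
    have := recRel_of_chain lt' (fun _ : Fin S => (1 : ℝ)) (fun _ => by norm_num) J
      (fun i _ p q hpq => hJ i (hweak p q hpq))
      (fun i j _ _ => (le_total i j).imp (fun h => hm h) (fun h => hm h))
    convert this using 1 <;> (funext p; simp)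
  -- a chain representation of `x`
  rw [RPPmarked, Set.mem_finsetSum] at hx
  obtain ⟨g, hg, hgx⟩ := hx
  have hg' : ∀ K, ∃ y, K ∈ F → y ∈ RPPfund lt lt' Pstar K ∧ (α K : ℝ) • y = g K := by
    intro K
    by_cases hK : K ∈ F
    · obtain ⟨y, hy, h⟩ := hg hK
      exact ⟨y, fun _ => ⟨hy, h⟩⟩
    · exact ⟨0, fun h => absurd h hK⟩
  choose y hy using hg'
  have hxy : ∑ K ∈ F, (α K : ℝ) • y K = fun p => (x p : ℝ) := by
    rw [← hgx]
    exact Finset.sum_congr rfl fun K hK => (hy K hK).2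
  have hrep := exists_rep_sum lt lt' F α y
    (fun K hK => exists_rep_fund lt lt' Pstar K (y K) (hy K hK).1)
  rw [hxy] at hrep
  obtain ⟨c, ⟨c1, c2, c3, c4⟩, hch⟩ :=
    exists_chain_rep lt lt' hlt'irr hlt'tr hweak hstar _ _ hrep
  have cid : ∀ J, c J ≠ 0 → IsLowerIdeal lt J := fun J h => by
    by_contra hh; exact h (c2 J hh)
  have hR := recRel_of_chain lt' c c1 (fun J => J)
    (fun J h p q hpq => cid J h (hweak p q hpq)) hch
  set z : P → ℝ := fun p => ∑ J, c J * ind J p with hz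
  have hR : RecRel lt' (fun p => (x p : ℝ)) z := by
    convert hR using 1
    funext p
    exact (c4 p).symm
  have ind01 : ∀ (A : Set P) p, 0 ≤ ind A p ∧ ind A p ≤ 1 := fun A p => by
    by_cases h : p ∈ A <;> simp [ind, h]
  have znn : ∀ p, 0 ≤ z p := fun p =>
    Finset.sum_nonneg fun J _ => mul_nonneg (c1 J) (ind01 J p).1
  have zS : ∀ p, z p ≤ S := fun p => by
    rw [hS, ← c3]
    exact Finset.sum_le_sum fun J _ => mul_le_of_le_one_right (c1 J) (ind01 J p).2
  have zanti : ∀ p q, lt p q → z q ≤ z p := fun p q hpq => by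
    refine Finset.sum_le_sum fun J _ => ?_
    by_cases h0 : c J = 0
    · simp [h0]
    refine mul_le_mul_of_nonneg_left ?_ (c1 J)
    by_cases hq : q ∈ J
    · have := cid J h0 hpq hq
      simp [ind, hq, this]
    · simpa [ind, hq] using (ind01 J p).1
  have zint : ∀ p, ∃ n : ℕ, z p = n := fun p => by
    obtain ⟨n, hn⟩ := hR.int hlt'irr hlt'tr p
    have : 0 ≤ n := by have := znn p; rw [hn] at this; exact_mod_cast this
    lift n to ℕ using this
    exact ⟨n, by simpa using hn⟩
  choose w hw using zint
  have wS : ∀ p, w p ≤ S := fun p => by have := zS p; rw [hw] at this; exact_mod_cast this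
  have zstar : ∀ p ∈ Pstar, z p = ∑ K ∈ F, (α K : ℝ) * ind K p := by
    intro p hp
    obtain ⟨m, h1, h2, h3, h4⟩ := hR p
    have hm : m = 0 := by
      rcases h4 with h4 | ⟨q, hq, _⟩
      · exact h4
      · exact absurd hq (hiii p hp q)
    rw [h1, hm, add_zero]
    refine (congrFun hxy p).symm.trans ?_
    rw [Finset.sum_apply]
    refine Finset.sum_congr rfl fun K hK => ?_
    rw [Pi.smul_apply, fund_star lt lt' Pstar K hiii (y K) (hy K hK).1 p hp]
    rfl
  let J0 : Fin S → Set P := fun i => {p | S ≤ i + w p}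
  have J0id : ∀ i, IsLowerIdeal lt (J0 i) := fun i p q hpq hq => by
    have := zanti p q hpq
    rw [hw, hw] at this
    have : w q ≤ w p := by exact_mod_cast this
    simp only [J0, Set.mem_ofPred_eq] at hq ⊢
    omega
  have J0mono : Monotone J0 := fun i j hij p hp => by
    have : (i : ℕ) ≤ j := hij
    simp only [J0, Set.mem_ofPred_eq] at hp ⊢
    omega
  have J0sum : ∑ i, ind (J0 i) = z := by
    funext p
    rw [Finset.sum_apply, hw]
    exact level_sum w p (wS p)
  refine ⟨J0, ⟨J0id, J0mono, ?_, ?_⟩, ?_⟩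
  · obtain ⟨L, hL, hLc, hLs⟩ := exists_enum F α hαchain
    have hLsub : ∀ i, L i ⊆ Pstar := by
      intro i
      by_contra hcon
      have := hLs (fun K => if K ⊆ Pstar then 0 else 1)
      have h0 : ∑ K ∈ F, (α K : ℝ) * (if K ⊆ Pstar then (0 : ℝ) else 1) = 0 := by
        refine Finset.sum_eq_zero fun K hK => ?_
        have : K ∈ idealsOn lt Pstar := by simpa [hF] using hK
        simp [this.1]
      have h1 := this.trans h0
      rw [Finset.sum_eq_zero_iff_of_nonneg (fun _ _ => by split_ifs <;> norm_num)] at h1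
      have := h1 i (Finset.mem_univ _)
      simp [hcon] at this
    have hJL : ∀ i, J0 i ∩ Pstar = L i := by
      intro i
      have hiff : ∀ p ∈ Pstar, (p ∈ L i ↔ S ≤ i + w p) := fun p hp => by
        refine mem_iff_level L hL w p ?_ i
        rw [hLs (fun K => ind K p), ← zstar p hp, hw]
      ext p
      constructor
      · rintro ⟨h, hp⟩
        exact (hiff p hp).2 h
      · intro h
        exact ⟨(hiff p (hLsub i h)).1 h, hLsub i h⟩
    intro K hK
    simp only [hJL]
    exact hLc K (by simpa [hF] using hK)
  · have := hrec J0 J0id J0mono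
    rw [J0sum] at this
    exact hR.unique_m this
  · rintro J ⟨hJ, hm, -, hxJ⟩
    have h1 := hrec J hJ hm
    rw [← hxJ] at h1
    have h2 := h1.unique_z hlt'irr hlt'tr hR
    funext i
    ext p
    exact mem_iff_level J hm w p (by rw [← hw, ← h2, Finset.sum_apply]) i
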